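/- For any positive integers m and n, ∑_{k_1+k_2+⋯+k_m=n} ∏_{i=1}^m (k_i m + 1)^{k_i - 1}/(m^{k_i} k_i!) = (n+1)^{n-1}/n!, where the sum ranges over all m-tuples (k_1,…,k_m) of nonnegative integers summing to n and each factor (k_i m + 1)^{k_i - 1} with k_i = 0 is interpreted as 1. -/

import Mathlib

/-! Write `Aₙ(x) = x (x + n a) ^ (n - 1)` for the Abel polynomials. Since `Aₙ₊₁` has derivative
`(n + 1) Aₙ(x + a)` and vanishes at `0`, both sides of Abel's identity
`∑ (n choose j) Aⱼ(x) Aₙ₋ⱼ(y) = Aₙ(x + y)` have the same derivative in `x` and the same value at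
`x = 0`, so induction on `n` proves it. Equivalently, the exponential generating function of the
`Aₙ(x)` turns sums of arguments `x` into products. Comparing coefficients in its `m`-th power at
`x = 1` for `a = m`, where `Aₖ(1) = (k m + 1) ^ (k - 1)` and `Aₙ(m) = m ^ n (n + 1) ^ (n - 1)`,
gives the theorem. -/

open Finset Polynomial
open scoped Nat

lemma derivative_taylor {R : Type*} [CommSemiring R] (r : R) (p : R[X]) :
    derivative (taylor r p) = taylor r (derivative p) := by
  rw [taylor_apply, derivative_comp, derivative_X_add_C, one_mul, taylor_apply]

lemma eq_of_derivative_eq_of_eval_zero_eq {R : Type*} [Semiring R] [IsAddTorsionFree R]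
    {p q : R[X]} (hderiv : derivative p = derivative q) (hzero : p.eval 0 = q.eval 0) : p = q := by
  ext n
  cases n with
  | zero => rwa [coeff_zero_eq_eval_zero, coeff_zero_eq_eval_zero]
  | succ n =>
    have hcoeff : (n + 1) • p.coeff (n + 1) = (n + 1) • q.coeff (n + 1) := by
      simpa only [nsmul_eq_mul', Nat.cast_succ, coeff_derivative] using congrArg (coeff · n) hderiv
    exact nsmul_right_injective n.succ_ne_zero hcoeff

lemma coeff_prod_eq_sum_antidiagonalTuple {R : Type*} [CommSemiring R] {m : ℕ}
    (f : Fin m → PowerSeries R) (n : ℕ) :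
    PowerSeries.coeff n (∏ i, f i) =
      ∑ k ∈ Nat.antidiagonalTuple m n, ∏ i, PowerSeries.coeff (k i) (f i) := by
  rw [PowerSeries.coeff_prod]
  exact sum_equiv Finsupp.equivFunOnFinite (by simp [Nat.mem_antidiagonalTuple]) (by simp)

section AbelPolynomial

variable {R : Type*} [CommSemiring R]

/-- The Abel polynomial `X (X + n a) ^ (n - 1)`, equal to `1` for `n = 0`. The usual sign convention
is `X (X - n a) ^ (n - 1)`. -/
noncomputable def abelPolynomial (a : R) : ℕ → R[X]
  | 0 => 1
  | n + 1 => X * (X + C ((n + 1) * a)) ^ n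

lemma abelPolynomial_zero (a : R) : abelPolynomial a 0 = 1 := rfl

lemma eval_zero_abelPolynomial_succ (a : R) (n : ℕ) : (abelPolynomial a (n + 1)).eval 0 = 0 := by
  simp [abelPolynomial]

lemma eval_one_abelPolynomial (a : R) (n : ℕ) :
    (abelPolynomial a n).eval 1 = (n * a + 1) ^ (n - 1) := by
  cases n <;> simp [abelPolynomial, add_comm]

lemma eval_self_abelPolynomial (a : R) (n : ℕ) :
    (abelPolynomial a n).eval a = a ^ n * (n + 1) ^ (n - 1) := by
  cases n with
  | zero => simp [abelPolynomial]
  | succ n =>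
    simp only [abelPolynomial, eval_mul, eval_X, eval_pow, eval_add, eval_C, Nat.add_sub_cancel]
    push_cast
    rw [show a + (n + 1) * a = a * (n + 1 + 1) by ring, mul_pow, pow_succ' a, mul_assoc]

lemma derivative_abelPolynomial_succ (a : R) (n : ℕ) :
    derivative (abelPolynomial a (n + 1)) = C (n + 1 : R) * taylor a (abelPolynomial a n) := by
  cases n with
  | zero => simp [abelPolynomial]
  | succ n =>
    simp only [abelPolynomial, derivative_mul, derivative_X, derivative_X_add_C_pow, taylor_mul,
      taylor_pow, taylor_X, taylor_C, map_add (taylor a), Nat.add_sub_cancel]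
    push_cast [map_add, map_mul, map_natCast, map_one]
    ring

variable [IsAddTorsionFree R]

theorem taylor_abelPolynomial (a y : R) (n : ℕ) :
    taylor y (abelPolynomial a n) = ∑ p ∈ antidiagonal n,
      C (n.choose p.1 * (abelPolynomial a p.2).eval y) * abelPolynomial a p.1 := by
  induction n with
  | zero => simp [abelPolynomial]
  | succ n ih =>
    apply eq_of_derivative_eq_of_eval_zero_eq
    · have hchoose (j : ℕ) : ((n + 1).choose (j + 1) : R) * (j + 1) = (n + 1) * n.choose j :=
        mod_cast congrArg (Nat.cast (R := R)) (n.add_one_mul_choose_eq j).symm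
      calc derivative (taylor y (abelPolynomial a (n + 1)))
          = C (n + 1 : R) * taylor a (taylor y (abelPolynomial a n)) := by
            rw [derivative_taylor, derivative_abelPolynomial_succ, taylor_mul, taylor_C,
              taylor_taylor, taylor_taylor, add_comm y a]
        _ = ∑ p ∈ antidiagonal n, C ((n + 1) * n.choose p.1 * (abelPolynomial a p.2).eval y) *
              taylor a (abelPolynomial a p.1) := by
            simp only [ih, map_sum, taylor_mul, taylor_C, mul_sum, ← mul_assoc, ← C_mul]
        _ = ∑ p ∈ antidiagonal n, derivative
              (C ((n + 1).choose (p.1 + 1) * (abelPolynomial a p.2).eval y) *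
                abelPolynomial a (p.1 + 1)) := by
            refine sum_congr rfl fun p _ => ?_
            rw [derivative_C_mul, derivative_abelPolynomial_succ, ← mul_assoc, ← C_mul, ← hchoose,
              mul_right_comm]
        _ = _ := by
            rw [Nat.sum_antidiagonal_succ, abelPolynomial_zero, mul_one, derivative_add,
              derivative_C, zero_add, derivative_sum]
    · simp [Nat.sum_antidiagonal_succ, eval_finsetSum, eval_zero_abelPolynomial_succ, taylor_eval,
        abelPolynomial_zero]

theorem abel_binomial_theorem (a x y : R) (n : ℕ) :
    ∑ p ∈ antidiagonal n,
      n.choose p.1 * (abelPolynomial a p.1).eval x * (abelPolynomial a p.2).eval y =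
      (abelPolynomial a n).eval (x + y) := by
  rw [← taylor_eval, taylor_abelPolynomial, eval_finsetSum]
  simp only [eval_mul, eval_C, mul_right_comm]

end AbelPolynomial

section AbelSeries

variable {K : Type*} [Semifield K]

/-- The exponential generating function of the Abel polynomials evaluated at `x`. -/
noncomputable def abelSeries (a x : K) : PowerSeries K :=
  PowerSeries.mk fun n => (abelPolynomial a n).eval x / n !

lemma abelSeries_zero (a : K) : abelSeries a 0 = 1 := by
  ext n
  cases n <;> simp [abelSeries, PowerSeries.coeff_one, eval_zero_abelPolynomial_succ,
    abelPolynomial_zero]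

variable [CharZero K]

lemma abelSeries_add (a x y : K) : abelSeries a (x + y) = abelSeries a x * abelSeries a y := by
  ext n
  simp only [abelSeries, PowerSeries.coeff_mul, PowerSeries.coeff_mk, ← abel_binomial_theorem,
    sum_div]
  refine sum_congr rfl fun p hp => ?_
  have hfact : (n ! : K) ≠ 0 := mod_cast n.factorial_ne_zero
  rw [← mem_antidiagonal.mp hp] at hfact ⊢
  rw [Nat.cast_add_choose]
  field_simp

lemma abelSeries_sum {ι : Type*} (a : K) (s : Finset ι) (x : ι → K) :
    abelSeries a (∑ i ∈ s, x i) = ∏ i ∈ s, abelSeries a (x i) := by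
  induction s using Finset.cons_induction with
  | empty => simp [abelSeries_zero]
  | cons i s hi ih => rw [sum_cons, prod_cons, abelSeries_add, ih]

theorem abel_multinomial_theorem {m : ℕ} (a : K) (x : Fin m → K) (n : ℕ) :
    ∑ k ∈ Nat.antidiagonalTuple m n, ∏ i, (abelPolynomial a (k i)).eval (x i) / (k i)! =
      (abelPolynomial a n).eval (∑ i, x i) / n ! := by
  simpa [abelSeries, coeff_prod_eq_sum_antidiagonalTuple] using
    congrArg (PowerSeries.coeff n) (abelSeries_sum a univ x).symm

end AbelSeries

theorem coefficient_identity_m_general {K : Type*} [Semifield K] [CharZero K] {m : ℕ} (hm : m ≠ 0)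
    (n : ℕ) :
    ∑ k ∈ Nat.antidiagonalTuple m n,
      ∏ i, ((k i : K) * m + 1) ^ (k i - 1) / ((m : K) ^ k i * (k i)!) =
      ((n : K) + 1) ^ (n - 1) / n ! := by
  have hmK : (m : K) ^ n ≠ 0 := pow_ne_zero n (mod_cast hm)
  calc ∑ k ∈ Nat.antidiagonalTuple m n,
        ∏ i, ((k i : K) * m + 1) ^ (k i - 1) / ((m : K) ^ k i * (k i)!)
      = ∑ k ∈ Nat.antidiagonalTuple m n,
          (∏ i, (abelPolynomial (m : K) (k i)).eval 1 / (k i)!) / (m : K) ^ n := by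
        refine sum_congr rfl fun k hk => ?_
        rw [← Nat.mem_antidiagonalTuple.mp hk, ← prod_pow_eq_pow_sum, ← prod_div_distrib]
        simp only [eval_one_abelPolynomial, div_div, mul_comm]
    _ = (abelPolynomial (m : K) n).eval (m : K) / n ! / (m : K) ^ n := by
        rw [← sum_div, abel_multinomial_theorem (m : K) fun _ => 1]
        simp
    _ = ((n : K) + 1) ^ (n - 1) / n ! := by
        rw [eval_self_abelPolynomial, div_right_comm, mul_div_cancel_left₀ _ hmK]

theorem coefficient_identity_m (m n : ℕ) (hm : 0 < m) (hn : 0 < n) :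
    ∑ k ∈ Finset.Nat.antidiagonalTuple m n,
      ∏ i, ((k i : ℝ) * m + 1) ^ (k i - 1) / ((m : ℝ) ^ (k i) * (Nat.factorial (k i) : ℝ))
      = ((n : ℝ) + 1) ^ (n - 1) / (Nat.factorial n : ℝ) :=
  coefficient_identity_m_general hm.ne' n
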